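/- Let n be a natural number, N = 2^n, let F be the 2×2 matrix over ZMod 2 with rows (1,0) and (1,1), and let B_N be the bit-reversal permutation matrix on Fin N. Then B_N · F^{⊗n} = F^{⊗n} · B_N. -/

import Mathlib

/-!
Bit reversal moves the least significant bit of an index to the top. The Kronecker power is
defined by peeling off the most significant bit, but by associativity of the Kronecker product
the least significant bit can be peeled off in the same way. Since the scalars commute, comparing
the two recursions shows that reversing the bits of both the row and the column index leaves every
entry of `F^{⊗n}` unchanged. A matrix with this invariance commutes with the permutation matrix.
-/

open Matrix Kronecker

/-- The Arıkan polar kernel, the 2×2 matrix over `ZMod 2` with rows (1,0) and (1,1). -/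
def polarKernel : Matrix (Fin 2) (Fin 2) (ZMod 2) := !![1, 0; 1, 1]

/-- The index identification `Fin 2 × Fin (2^n) ≃ Fin (2^(n+1))` sending the
pair `(i₁, i₂)` (with `i₁` the major/most-significant component) to `i₂ + 2^n * i₁`. -/
def kronIdx (n : ℕ) : Fin 2 × Fin (2 ^ n) ≃ Fin (2 ^ (n + 1)) :=
  finProdFinEquiv.trans (finCongr (pow_succ' 2 n).symm)

/-- The n-fold Kronecker power of a 2×2 matrix over `ZMod 2`, as a `2^n × 2^n` matrix. -/
def kronPow (F : Matrix (Fin 2) (Fin 2) (ZMod 2)) :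
    (n : ℕ) → Matrix (Fin (2 ^ n)) (Fin (2 ^ n)) (ZMod 2)
  | 0 => 1
  | n + 1 => Matrix.reindex (kronIdx n) (kronIdx n) (F ⊗ₖ kronPow F n)

/-- The bit-reversal permutation on `Fin (2^n)`: the index with binary digits
(b₀, …, b_{n−1}) (least significant bit first) is sent to the index with binary
digits (b_{n−1}, …, b₀). Defined recursively: the least significant bit of the
input becomes the most significant bit of the output. -/
def bitRevPerm : (n : ℕ) → Equiv.Perm (Fin (2 ^ n))
  | 0 => Equiv.refl _
  | n + 1 =>
    (finCongr (pow_succ 2 n)).trans <|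
      finProdFinEquiv.symm.trans <|
        (Equiv.prodCongr (bitRevPerm n) (Equiv.refl (Fin 2))).trans <|
          (Equiv.prodComm (Fin (2 ^ n)) (Fin 2)).trans <|
            finProdFinEquiv.trans (finCongr (pow_succ' 2 n).symm)

/-- The permutation matrix over `ZMod 2` of a permutation σ of `Fin N`:
its (i, j) entry is 1 exactly when `i = σ j`. -/
def permMatrix {N : ℕ} (σ : Equiv.Perm (Fin N)) : Matrix (Fin N) (Fin N) (ZMod 2) :=
  Matrix.of fun i j => if i = σ j then 1 else 0

/-- The bit-reversal permutation matrix on `Fin (2^n)`. -/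
def bitRevMatrix (n : ℕ) : Matrix (Fin (2 ^ n)) (Fin (2 ^ n)) (ZMod 2) :=
  permMatrix (bitRevPerm n)

section PermMatrix

variable {N : ℕ} {ι : Type*} (σ : Equiv.Perm (Fin N))

-- Mathlib puts the ones of a permutation matrix at `j = σ i` instead of `i = σ j`.
lemma permMatrix_eq_toMatrix_symm : permMatrix σ = σ.symm.toPEquiv.toMatrix := by
  ext i j
  simp [permMatrix, PEquiv.toMatrix_apply, Equiv.symm_apply_eq]

lemma permMatrix_mul (M : Matrix (Fin N) ι (ZMod 2)) :
    permMatrix σ * M = M.submatrix σ.symm id := by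
  rw [permMatrix_eq_toMatrix_symm, PEquiv.toMatrix_toPEquiv_mul]

lemma mul_permMatrix (M : Matrix ι (Fin N) (ZMod 2)) :
    M * permMatrix σ = M.submatrix id σ := by
  rw [permMatrix_eq_toMatrix_symm, PEquiv.mul_toMatrix_toPEquiv, Equiv.symm_symm]

lemma commute_permMatrix_iff (M : Matrix (Fin N) (Fin N) (ZMod 2)) :
    Commute (permMatrix σ) M ↔ M.submatrix σ σ = M := by
  rw [commute_iff_eq, permMatrix_mul, mul_permMatrix]
  constructor
  · intro h
    simpa using (congrArg (submatrix · σ id) h).symm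
  · intro h
    simpa using (congrArg (submatrix · σ.symm id) h).symm

end PermMatrix

/-- The index identification `Fin (2^n) × Fin 2 ≃ Fin (2^(n+1))` sending `(q, r)` to `r + 2 * q`,
so that `r` is the least significant bit. It is the counterpart of `kronIdx`, which attaches a
most significant bit. -/
def lowIdx (n : ℕ) : Fin (2 ^ n) × Fin 2 ≃ Fin (2 ^ (n + 1)) :=
  finProdFinEquiv.trans (finCongr (pow_succ 2 n).symm)

lemma bitRevPerm_lowIdx (n : ℕ) (q : Fin (2 ^ n)) (r : Fin 2) :
    bitRevPerm (n + 1) (lowIdx n (q, r)) = kronIdx n (r, bitRevPerm n q) := by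
  simp [bitRevPerm, lowIdx, kronIdx]

lemma lowIdx_zero (p : Fin (2 ^ 0)) (r : Fin 2) : lowIdx 0 (p, r) = kronIdx 0 (r, p) := by
  decide +revert

lemma lowIdx_kronIdx (n : ℕ) (a : Fin 2) (q : Fin (2 ^ n)) (r : Fin 2) :
    lowIdx (n + 1) (kronIdx n (a, q), r) = kronIdx (n + 1) (a, lowIdx n (q, r)) := by
  ext
  simp only [lowIdx, kronIdx, Equiv.trans_apply, finCongr_apply, Fin.val_cast,
    finProdFinEquiv_apply_val]
  ring

section KronPow

variable (F : Matrix (Fin 2) (Fin 2) (ZMod 2)) (n : ℕ)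

lemma kronPow_succ_kronIdx (a b : Fin 2) (p q : Fin (2 ^ n)) :
    kronPow F (n + 1) (kronIdx n (a, p)) (kronIdx n (b, q)) = F a b * kronPow F n p q := by
  simp [kronPow]

lemma kronPow_succ_lowIdx (p q : Fin (2 ^ n)) (r s : Fin 2) :
    kronPow F (n + 1) (lowIdx n (p, r)) (lowIdx n (q, s)) = kronPow F n p q * F r s := by
  induction n with
  | zero => rw [lowIdx_zero, lowIdx_zero, kronPow_succ_kronIdx, mul_comm]
  | succ n ih =>
    obtain ⟨⟨a, p⟩, rfl⟩ := (kronIdx n).surjective p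
    obtain ⟨⟨b, q⟩, rfl⟩ := (kronIdx n).surjective q
    calc kronPow F (n + 2) (lowIdx (n + 1) (kronIdx n (a, p), r))
          (lowIdx (n + 1) (kronIdx n (b, q), s))
        = F a b * kronPow F (n + 1) (lowIdx n (p, r)) (lowIdx n (q, s)) := by
          rw [lowIdx_kronIdx, lowIdx_kronIdx, kronPow_succ_kronIdx]
      _ = F a b * kronPow F n p q * F r s := by rw [ih, mul_assoc]
      _ = kronPow F (n + 1) (kronIdx n (a, p)) (kronIdx n (b, q)) * F r s := by
          rw [kronPow_succ_kronIdx]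

lemma kronPow_bitRevPerm (i j : Fin (2 ^ n)) :
    kronPow F n (bitRevPerm n i) (bitRevPerm n j) = kronPow F n i j := by
  induction n with
  | zero => rfl
  | succ n ih =>
    obtain ⟨⟨p, r⟩, rfl⟩ := (lowIdx n).surjective i
    obtain ⟨⟨q, s⟩, rfl⟩ := (lowIdx n).surjective j
    calc kronPow F (n + 1) (bitRevPerm (n + 1) (lowIdx n (p, r)))
          (bitRevPerm (n + 1) (lowIdx n (q, s)))
        = F r s * kronPow F n (bitRevPerm n p) (bitRevPerm n q) := by
          rw [bitRevPerm_lowIdx, bitRevPerm_lowIdx, kronPow_succ_kronIdx]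
      _ = kronPow F n p q * F r s := by rw [ih, mul_comm]
      _ = kronPow F (n + 1) (lowIdx n (p, r)) (lowIdx n (q, s)) :=
          (kronPow_succ_lowIdx F n p q r s).symm

theorem bitRevMatrix_mul_kronPow_comm_general :
    bitRevMatrix n * kronPow F n = kronPow F n * bitRevMatrix n :=
  (commute_permMatrix_iff _ _).mpr (Matrix.ext (kronPow_bitRevPerm F n))

end KronPow

/-- The bit-reversal permutation matrix commutes with the n-fold
Kronecker power of the Arıkan kernel: `B_N · F^{⊗n} = F^{⊗n} · B_N`. -/
theorem bitRevMatrix_mul_kronPow_comm (n : ℕ) :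
    bitRevMatrix n * kronPow polarKernel n = kronPow polarKernel n * bitRevMatrix n :=
  bitRevMatrix_mul_kronPow_comm_general polarKernel n
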